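/- Let k₂ ⊆ k₁ be fields with k₁ finite-dimensional as a k₂-vector space, and let R be a finite-dimensional k₁-algebra, regarded also as a k₂-algebra by restriction of scalars. Let λ₁ : R → k₁ be a k₁-linear functional whose kernel contains no nonzero left ideals of R, and let σ : R → R be a ring automorphism satisfying λ₁(r*s) = λ₁(s * σ(r)) for all r, s ∈ R. Then there exists a k₂-linear functional λ₂ : R → k₂ whose kernel contains no nonzero left ideals of R and which satisfies λ₂(r*s) = λ₂(s * σ(r)) for all r, s ∈ R. -/

import Mathlib

/-!
A Frobenius functional on a `k₁`-algebra `R` followed by a Frobenius functional `f` on the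
`k₂`-algebra `k₁` is again Frobenius: the image in `k₁` of a left ideal of `R` is an ideal, and
it vanishes as soon as `f` kills it. Since a field has only the trivial ideals, any nonzero `f`
will do, and applying `f` to both sides preserves the Nakayama identity.
-/

/-- Frobenius functionals on a `k`-algebra `R`: linear functionals whose kernel contains no nonzero
left ideal (`Ideal R` is the type of left ideals when `R` is noncommutative). -/
def IsFrobeniusFunctional {k R : Type*} [CommSemiring k] [Semiring R] [Algebra k R]
    (lam : R →ₗ[k] k) : Prop :=
  ∀ I : Ideal R, (I : Set R) ⊆ {x | lam x = 0} → I = ⊥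

/-- The identity characterizing the Nakayama automorphism `σ` of a functional `lam`. Here `σ` is a
bare function: over a ring, if `lam` is Frobenius, the identity forces `σ` to be a ring
homomorphism. -/
def IsNakayamaMap {k R : Type*} [CommSemiring k] [Semiring R] [Algebra k R]
    (lam : R →ₗ[k] k) (σ : R → R) : Prop :=
  ∀ r s : R, lam (r * s) = lam (s * σ r)

section Composition

variable {k K R : Type*} [CommSemiring k] [CommSemiring K] [Algebra k K] [Semiring R]
  [Algebra K R] [Algebra k R] [IsScalarTower k K R] {lam : R →ₗ[K] K}

theorem IsFrobeniusFunctional.comp {f : K →ₗ[k] k} (hf : IsFrobeniusFunctional f)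
    (hlam : IsFrobeniusFunctional lam) :
    IsFrobeniusFunctional (f ∘ₗ lam.restrictScalars k) := by
  intro I hI
  let J : Ideal K := (I.restrictScalars K).map lam
  have hJ : J = ⊥ := hf J (Set.image_subset_iff.2 hI)
  exact hlam I (LinearMap.le_ker_iff_map.2 hJ)

theorem IsNakayamaMap.comp {σ : R → R} (hσ : IsNakayamaMap lam σ) (f : K →ₗ[k] k) :
    IsNakayamaMap (f ∘ₗ lam.restrictScalars k) σ :=
  fun r s => congrArg f (hσ r s)

end Composition

theorem isFrobeniusFunctional_of_ne_zero {k D : Type*} [CommSemiring k] [DivisionSemiring D]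
    [Algebra k D] {f : D →ₗ[k] k} (hf : f ≠ 0) : IsFrobeniusFunctional f := by
  intro I hI
  refine (Ideal.eq_bot_or_top I).resolve_right ?_
  rintro rfl
  exact hf (LinearMap.ext fun x => hI (Submodule.mem_top (x := x)))

theorem exists_isFrobeniusFunctional (k D : Type*) [Field k] [DivisionRing D] [Algebra k D] :
    ∃ f : D →ₗ[k] k, IsFrobeniusFunctional f :=
  let ⟨f, hf⟩ := exists_ne (0 : Module.Dual k D)
  ⟨f, isFrobeniusFunctional_of_ne_zero hf⟩

theorem nakayama_independent_of_field_of_finite_extension_general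
    {k₂ k₁ R : Type*} [Field k₂] [Field k₁] [Algebra k₂ k₁]
    [Ring R] [Algebra k₁ R] [Algebra k₂ R] [IsScalarTower k₂ k₁ R]
    {lam₁ : R →ₗ[k₁] k₁} (hlam₁ : IsFrobeniusFunctional lam₁)
    {σ : R → R} (hσ : IsNakayamaMap lam₁ σ) :
    ∃ lam₂ : R →ₗ[k₂] k₂, IsFrobeniusFunctional lam₂ ∧ IsNakayamaMap lam₂ σ :=
  let ⟨f, hf⟩ := exists_isFrobeniusFunctional k₂ k₁
  ⟨f ∘ₗ lam₁.restrictScalars k₂, hf.comp hlam₁, hσ.comp f⟩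

/-- Let `k₂ ⊆ k₁` be fields with `k₁` finite-dimensional over `k₂`, and let
`R` be a finite-dimensional `k₁`-algebra (hence a `k₂`-algebra by restriction of scalars).
If `λ₁ : R → k₁` is a `k₁`-linear Frobenius functional with Nakayama automorphism `σ`, then
there is a `k₂`-linear Frobenius functional `λ₂ : R → k₂` with the same Nakayama
automorphism `σ`. -/
theorem nakayama_independent_of_field_of_finite_extension
    {k₂ k₁ R : Type*} [Field k₂] [Field k₁] [Algebra k₂ k₁] [FiniteDimensional k₂ k₁]
    [Ring R] [Algebra k₁ R] [Algebra k₂ R] [IsScalarTower k₂ k₁ R]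
    [FiniteDimensional k₁ R]
    (lam₁ : R →ₗ[k₁] k₁)
    (hlam₁ : ∀ I : Ideal R, (I : Set R) ⊆ {x | lam₁ x = 0} → I = ⊥)
    (σ : R ≃+* R) (hσ : ∀ r s : R, lam₁ (r * s) = lam₁ (s * σ r)) :
    ∃ lam₂ : R →ₗ[k₂] k₂,
      (∀ I : Ideal R, (I : Set R) ⊆ {x | lam₂ x = 0} → I = ⊥) ∧
      (∀ r s : R, lam₂ (r * s) = lam₂ (s * σ r)) := by
  exact nakayama_independent_of_field_of_finite_extension_general hlam₁ hσ
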